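/- Let j', j'', j be integers and ell', ell'', ellcap, ell odd integers in [t]. Consider the family F of ordered pairs (A,B) of subsets of [t] with |A| = j' < t, |B| = j'' < t, |A intersect B| = j > 0, max{j',j''} < |A union B| < t, q(A - B) = ell', q(B - A) = ell'', q(A intersect B) = ellcap and q(A union B) = ell. Then: (i) the number of pairs (A,B) in F with {1,t} intersect A = {1,t} intersect B = {1} is Fr(gamma,theta;(ell+1)/2,(ell'-1)/2,(ell''-1)/2,(ellcap+1)/2) * c((ell+1)/2; t-(j'+j''-j)) * c((ell'-1)/2; j'-j) * c((ell''-1)/2; j''-j) * c((ellcap+1)/2; j); (ii) the number with {1,t} intersect A = {1} and {1,t} intersect B = {1,t} is Fr(gamma,beta;(ell-1)/2,(ell'-1)/2,(ell''+1)/2,(ellcap+1)/2) * c((ell-1)/2; t-(j'+j''-j)) * c((ell'-1)/2; j'-j) * c((ell''+1)/2; j''-j) * c((ellcap+1)/2; j); (iii) the number with {1,t} intersect A = {1} and {1,t} intersect B empty is Fr(alpha,theta;(ell+1)/2,(ell'+1)/2,(ell''-1)/2,(ellcap-1)/2) * c((ell+1)/2; t-(j'+j''-j)) * c((ell'+1)/2;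 j'-j) * c((ell''-1)/2; j''-j) * c((ellcap-1)/2; j); (iv) the number with {1,t} intersect A = {1} and {1,t} intersect B = {t} is Fr(alpha,beta;(ell-1)/2,(ell'+1)/2,(ell''+1)/2,(ellcap-1)/2) * c((ell-1)/2; t-(j'+j''-j)) * c((ell'+1)/2; j'-j) * c((ell''+1)/2; j''-j) * c((ellcap-1)/2; j); (v) the number with {1,t} intersect A = {1,t} intersect B = {1,t} is Fr(gamma,gamma;(ell-1)/2,(ell'-1)/2,(ell''-1)/2,(ellcap+1)/2) * c((ell-1)/2; t-(j'+j''-j)) * c((ell'-1)/2; j'-j) * c((ell''-1)/2; j''-j) * c((ellcap+1)/2; j). -/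

import Mathlib

open Finset

noncomputable section

/-- Row vectors of `ℝ^t`. -/
abbrev Vec (t : ℕ) := Fin t → ℝ

/-- `T` is a vertex of the discrete hypercube `{1,-1}^t`. -/
def IsPMVertex {t : ℕ} (T : Vec t) : Prop := ∀ i, T i = 1 ∨ T i = -1

/-- `T` is a vertex of the discrete hypercube `{0,1}^t`. -/
def Is01Vertex {t : ℕ} (T : Vec t) : Prop := ∀ i, T i = 0 ∨ T i = 1

open Classical in
/-- Hamming distance between two vectors. -/
def hamming {t : ℕ} (X Y : Vec t) : ℕ :=
  (Finset.univ.filter fun i => X i ≠ Y i).card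

/-- The standard scalar product on `ℝ^t`. -/
def sprod {t : ℕ} (X Y : Vec t) : ℝ := ∑ i, X i * Y i

open Classical in
/-- The cardinality of the negative part `T⁻ = {e : T e = -1}` of `T`. -/
def negCard {t : ℕ} (T : Vec t) : ℕ :=
  (Finset.univ.filter fun i => T i = -1).card

open Classical in
/-- The Hamming weight (number of coordinates equal to `1`) of a `0/1`-vector. -/
def hwt01 {t : ℕ} (T : Vec t) : ℕ :=
  (Finset.univ.filter fun i => T i = 1).card

/-- `D` (read as a `2t`-periodic sequence `D^0, D^1, …`) is a symmetric cycle in the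
hypercube graph `H(t,2)` on the vertex set `{1,-1}^t`: all `D^k` are vertices,
consecutive members are adjacent (Hamming distance `1`), the `2t` members
`D^0, …, D^{2t-1}` are pairwise distinct, and `D^{k+t} = -D^k` for `0 ≤ k ≤ t-1`. -/
structure IsSymCycle (t : ℕ) (D : ℕ → Vec t) : Prop where
  vertex : ∀ k, IsPMVertex (D k)
  periodic : ∀ k, D (k + 2 * t) = D k
  adj : ∀ k, hamming (D k) (D (k + 1)) = 1
  inj : ∀ k l, k < 2 * t → l < 2 * t → D k = D l → k = l
  symm : ∀ k, k ≤ t - 1 → D (k + t) = -(D k)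

/-- `D` is a symmetric cycle in the hypercube graph on the vertex set `{0,1}^t`:
here `D^{k+t} = (1,…,1) - D^k` for `0 ≤ k ≤ t-1`. -/
structure IsSymCycle01 (t : ℕ) (D : ℕ → Vec t) : Prop where
  vertex : ∀ k, Is01Vertex (D k)
  periodic : ∀ k, D (k + 2 * t) = D k
  adj : ∀ k, hamming (D k) (D (k + 1)) = 1
  inj : ∀ k l, k < 2 * t → l < 2 * t → D k = D l → k = l
  symm : ∀ k, k ≤ t - 1 → D (k + t) = (fun _ => 1) - D k

open Classical in
/-- The vertex sequence `V(D) = (D^0, …, D^{2t-1})` of a cycle, as a finset. -/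
def VD (t : ℕ) (D : ℕ → Vec t) : Finset (Vec t) :=
  (Finset.range (2 * t)).image D

/-- `Q` is an inclusion-minimal subset of `V(D)` whose members sum to `T` (in `ℝ^t`). -/
def IsMinDecomp (t : ℕ) (D : ℕ → Vec t) (T : Vec t) (Q : Finset (Vec t)) : Prop :=
  Q ⊆ VD t D ∧ (∑ q ∈ Q, q) = T ∧
    ∀ Q' : Finset (Vec t), Q' ⊆ VD t D → (∑ q ∈ Q', q) = T → ¬Q' ⊂ Q

/-- The vertex `T_S ∈ {1,-1}^t` whose negative part is `S`. -/
def topeOf (t : ℕ) (S : Finset (Fin t)) : Vec t := fun i => if i ∈ S then -1 else 1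

/-- `x` is a coordinate vector of `T` w.r.t. `(D^0, …, D^{t-1})` with all
components in `{-1,0,1}`; by uniqueness this is the vector `x(T,D)`. -/
def IsXVec (t : ℕ) (D : ℕ → Vec t) (T : Vec t) (x : Fin t → ℝ) : Prop :=
  (∀ i, x i = -1 ∨ x i = 0 ∨ x i = 1) ∧ T = ∑ i : Fin t, x i • D (i : ℕ)

open Classical in
/-- The `{0,1}`-decomposition equation
`T = -(|Q|-1)/2 • (1,…,1) + ∑_{q ∈ Q, q ≠ 0} q`. -/
def Decomp01 (t : ℕ) (T : Vec t) (Q : Finset (Vec t)) : Prop :=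
  T = (-(((Q.card : ℝ) - 1) / 2)) • (fun _ => 1 : Vec t) +
    ∑ q ∈ Q.filter (fun q => q ≠ (0 : Vec t)), q

/-- `R^k` for `0 ≤ k ≤ t-1`: the all-ones vector with the first `k` coordinates negated. -/
def Rvec (t : ℕ) (k : ℕ) : Vec t := fun i => if (i : ℕ) < k then -1 else 1

/-- The distinguished symmetric cycle `R` in `H(t,2)`:
`R^0 = (1,…,1)`, `R^s = {}_{-[s]}R^0` for `1 ≤ s ≤ t-1`, and `R^{k+t} = -R^k`. -/
def Rcyc (t : ℕ) (k : ℕ) : Vec t :=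
  if k % (2 * t) < t then Rvec t (k % (2 * t)) else -(Rvec t (k % (2 * t) - t))

/-- `q(A) = ℓ`: an (automatically, the unique) inclusion-minimal subset of `V(R)`
summing to `T_A` has cardinality `ℓ`. -/
def qIs (t : ℕ) (A : Finset (Fin t)) (ℓ : ℕ) : Prop :=
  ∃ Q : Finset (Vec t), IsMinDecomp t (Rcyc t) (topeOf t A) Q ∧ Q.card = ℓ

/-- `c(m;n) = binom(n-1, m-1)`, the number of compositions of `n` into `m` positive
parts (zero whenever `m = 0` or `n ≤ 0`). -/
def comp (m : ℕ) (n : ℤ) : ℕ :=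
  if 1 ≤ m ∧ 1 ≤ n then ((n - 1).toNat).choose (m - 1) else 0

/-- The number of ternary Smirnov words (words with no two equal adjacent letters)
over the alphabet `(θ, α, β) = (0, 1, 2)` with Parikh vector `(k, i, j)`
(that is, `k` letters `θ`, `i` letters `α`, `j` letters `β`), starting with the
letter `s'` and ending with the letter `s''`. -/
def Tm (s' s'' : Fin 3) (k i j : ℕ) : ℕ :=
  Set.ncard { w : List (Fin 3) | List.Chain' (· ≠ ·) w ∧
    w.count 0 = k ∧ w.count 1 = i ∧ w.count 2 = j ∧
    w.head? = some s' ∧ w.getLast? = some s'' }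

/-- The number of Smirnov words over the alphabet `(θ, α, β, γ) = (0, 1, 2, 3)` with
Parikh vector `(k, i, j, h)`, starting with `s'` and ending with `s''`. -/
def Fr (s' s'' : Fin 4) (k i j h : ℕ) : ℕ :=
  Set.ncard { w : List (Fin 4) | List.Chain' (· ≠ ·) w ∧
    w.count 0 = k ∧ w.count 1 = i ∧ w.count 2 = j ∧ w.count 3 = h ∧
    w.head? = some s' ∧ w.getLast? = some s'' }

/-! Read a pair `(A, B)` of subsets of `[t]` as the word of length `t` whose `i`-th letter records
the membership of `i` in `A` and `B`. The vectors `R^0, …, R^{t-1}` form a basis of `ℝ^t` in which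
`T_A` has coordinates in `{-1, 0, 1}`, so `q(A)` is the number of nonzero coordinates, that is, the
number of sign changes in the sequence `T_A(1), …, T_A(t), -T_A(1)`. Hence each `q`-value together
with the end letters determines how many maximal runs a given letter has in the word. Collapsing
every run to one letter gives a Smirnov word, and the words over a given Smirnov word correspond to
the choices, for each letter, of a composition of the number of its occurrences into run lengths. -/

section Compositions

/-- The number of compositions of `n` into `m` positive parts. Unlike `comp`, it counts the empty
composition of `0`, so that the recursion `compCount_succ_succ` has no exceptions. -/
def compCount : ℕ → ℕ → ℕ
  | 0, 0 => 1
  | 0, _ + 1 => 0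
  | _ + 1, 0 => 0
  | m + 1, n + 1 => n.choose m

theorem compCount_succ_succ (m n : ℕ) :
    compCount (m + 1) (n + 1) = compCount (m + 1) n + compCount m n := by
  rcases n with _ | n <;> rcases m with _ | m <;>
    simp [compCount, Nat.choose_succ_succ, add_comm]

theorem compCount_zero_left (n : ℕ) : compCount 0 n = if n = 0 then 1 else 0 := by
  cases n <;> simp [compCount]

theorem comp_natCast_of_pos (m : ℕ) {n : ℕ} (hn : 0 < n) : comp m n = compCount m n := by
  obtain ⟨n, rfl⟩ := Nat.exists_eq_add_one.2 hn
  cases m <;> simp [comp, compCount]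

theorem comp_of_nonpos (m : ℕ) {z : ℤ} (hz : z ≤ 0) : comp m z = 0 := by
  rw [comp, if_neg]
  lia

end Compositions

section Runs

variable {α : Type*}

theorem head?_destutter' (R : α → α → Prop) [DecidableRel R] (a : α) (l : List α) :
    (l.destutter' R a).head? = some a := by
  induction l with
  | nil => rfl
  | cons b l ih => rw [List.destutter'_cons]; split_ifs <;> simp [ih]

theorem head?_destutter (R : α → α → Prop) [DecidableRel R] (w : List α) :
    (w.destutter R).head? = w.head? := by
  cases w with
  | nil => rfl
  | cons a l => exact head?_destutter' R a l

variable [DecidableEq α]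

theorem destutter_ne_cons_cons_self (a : α) (w : List α) :
    (a :: a :: w).destutter (· ≠ ·) = (a :: w).destutter (· ≠ ·) := by
  rw [List.destutter_cons_cons, if_neg (not_not.2 rfl), List.destutter_cons']

theorem destutter_ne_cons_cons_of_ne {a b : α} (h : a ≠ b) (w : List α) :
    (a :: b :: w).destutter (· ≠ ·) = a :: (b :: w).destutter (· ≠ ·) := by
  rw [List.destutter_cons_cons, if_pos h, List.destutter_cons']

theorem getLast?_destutter_ne : ∀ w : List α, (w.destutter (· ≠ ·)).getLast? = w.getLast?
  | [] => rfl
  | [_] => rfl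
  | a :: b :: w => by
    have ih := getLast?_destutter_ne (b :: w)
    obtain rfl | h := eq_or_ne a b
    · rw [destutter_ne_cons_cons_self, ih, List.getLast?_cons_cons]
    · rw [destutter_ne_cons_cons_of_ne h, List.getLast?_cons, ih, List.getLast?_cons_cons]
      simp [List.getLast?_cons]

theorem destutter_ne_cons_eq_cons_iff {a b : α} {w v : List α}
    (hv : (b :: v).IsChain (· ≠ ·)) :
    (a :: w).destutter (· ≠ ·) = b :: v ↔
      a = b ∧ (w.destutter (· ≠ ·) = b :: v ∨ w.destutter (· ≠ ·) = v) := by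
  cases w with
  | nil => simp
  | cons c w =>
    have hhead := head?_destutter (· ≠ ·) (c :: w)
    obtain rfl | hac := eq_or_ne a c
    · rw [destutter_ne_cons_cons_self]
      constructor
      · intro h
        rw [h] at hhead
        exact ⟨by simpa using hhead.symm, .inl h⟩
      · rintro ⟨rfl, h | rfl⟩
        · exact h
        · exact absurd hv (by
            cases h : (a :: w).destutter (· ≠ ·) <;> simp_all)
    · rw [destutter_ne_cons_cons_of_ne hac, List.cons.injEq]
      refine and_congr_right ?_
      rintro rfl
      refine ⟨.inr, fun h => h.resolve_left fun h => ?_⟩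
      rw [h] at hhead
      exact hac (by simpa using hhead)

/-- The words with Parikh vector `s`: those that use each letter as often as `s` contains it. -/
def wordsOf (s : Multiset α) : Finset (List α) := s.lists.toFinset

theorem mem_wordsOf {s : Multiset α} {w : List α} : w ∈ wordsOf s ↔ (w : Multiset α) = s := by
  simp [wordsOf, Multiset.mem_lists_iff, eq_comm]

theorem filter_destutter_ne_cons (b : α) (s : Multiset α) {v : List α}
    (hv : (b :: v).IsChain (· ≠ ·)) :
    {w ∈ wordsOf (b ::ₘ s) | w.destutter (· ≠ ·) = b :: v} =
      ({w ∈ wordsOf s | w.destutter (· ≠ ·) = b :: v} ∪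
        {w ∈ wordsOf s | w.destutter (· ≠ ·) = v}).map ⟨(b :: ·), List.cons_injective⟩ := by
  ext w
  cases w with
  | nil => simp
  | cons a w =>
    simp only [mem_filter, mem_wordsOf, destutter_ne_cons_eq_cons_iff hv, ← Multiset.cons_coe,
      mem_map, mem_union, Function.Embedding.coeFn_mk, List.cons.injEq]
    constructor
    · rintro ⟨hs, rfl, h⟩
      exact ⟨w, by rw [Multiset.cons_inj_right] at hs; tauto, rfl, rfl⟩
    · rintro ⟨w, h, rfl, rfl⟩
      rw [Multiset.cons_inj_right]
      tauto

theorem prod_compCount_cons_cons [Fintype α] (b : α) (r s : Multiset α) :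
    ∏ c, compCount ((b ::ₘ r).count c) ((b ::ₘ s).count c) =
      ∏ c, compCount ((b ::ₘ r).count c) (s.count c) + ∏ c, compCount (r.count c) (s.count c) := by
  simp only [← mul_prod_erase univ _ (mem_univ b), Multiset.count_cons_self, compCount_succ_succ,
    add_mul]
  congr! 2 <;> refine prod_congr rfl fun c hc => ?_ <;>
    simp [Multiset.count_cons_of_ne (ne_of_mem_erase hc)]

theorem card_filter_eq_nil [Fintype α] (s : Multiset α) :
    #{w ∈ wordsOf s | w = []} = ∏ c, compCount 0 (s.count c) := by
  obtain rfl | ⟨b, hb⟩ := s.empty_or_exists_mem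
  · have h : {w ∈ wordsOf (0 : Multiset α) | w = []} = {[]} := by
      ext w
      simp +contextual [mem_wordsOf]
    simp [h, compCount]
  · rw [prod_eq_zero (mem_univ b) (by simp [compCount_zero_left, hb]), card_filter_eq_zero_iff]
    rintro w hw rfl
    simp [← mem_wordsOf.1 hw] at hb

theorem filter_destutter_ne_eq_cons_of_notMem {b : α} {s : Multiset α} (hb : b ∉ s)
    {v : List α} :
    {w ∈ wordsOf s | w.destutter (· ≠ ·) = b :: v} = ∅ := by
  refine filter_eq_empty_iff.2 fun w hw h => hb ?_
  rw [← mem_wordsOf.1 hw, Multiset.mem_coe]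
  exact (List.destutter_sublist _ w).subset (h ▸ List.mem_cons_self)

theorem card_filter_destutter_ne_eq [Fintype α] (s : Multiset α) {v : List α}
    (hv : v.IsChain (· ≠ ·)) :
    #{w ∈ wordsOf s | w.destutter (· ≠ ·) = v} = ∏ c, compCount (v.count c) (s.count c) := by
  -- After the first letter `b` is removed from a word, the rest collapses either to the same
  -- Smirnov word or to its tail; this is Pascal's recursion in the factor of `b`.
  induction s using Multiset.strongInductionOn generalizing v with
  | ih s ih =>
  cases v with
  | nil => simpa only [List.destutter_eq_nil, List.count_nil] using card_filter_eq_nil s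
  | cons b v =>
    by_cases hb : b ∈ s
    · obtain ⟨s, rfl⟩ := Multiset.exists_cons_of_mem hb
      have hlt : s < b ::ₘ s := Multiset.lt_cons_self s b
      have hdisj : Disjoint {w ∈ wordsOf s | w.destutter (· ≠ ·) = b :: v}
          {w ∈ wordsOf s | w.destutter (· ≠ ·) = v} :=
        disjoint_filter.2 fun w _ h₁ h₂ => by simp [h₁] at h₂
      rw [filter_destutter_ne_cons b s hv, card_map, card_union_of_disjoint hdisj,
        ih s hlt hv, ih s hlt hv.of_cons]
      simpa only [Multiset.cons_coe, Multiset.coe_count] using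
        (prod_compCount_cons_cons b (v : Multiset α) s).symm
    · rw [filter_destutter_ne_eq_cons_of_notMem hb, card_empty, prod_eq_zero (mem_univ b)]
      simp [hb, compCount]

/-- The Smirnov words with Parikh vector `r` that start with `a` and end with `b`. -/
def smirnovWords (r : Multiset α) (a b : α) : Finset (List α) :=
  {w ∈ wordsOf r | w.IsChain (· ≠ ·) ∧ w.head? = some a ∧ w.getLast? = some b}

theorem destutter_ne_mem_smirnovWords {r : Multiset α} {a b : α} {w : List α} :
    w.destutter (· ≠ ·) ∈ smirnovWords r a b ↔
      (w.destutter (· ≠ ·) : Multiset α) = r ∧ w.head? = some a ∧ w.getLast? = some b := by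
  simp only [smirnovWords, mem_filter, mem_wordsOf, List.isChain_destutter, true_and,
    head?_destutter, getLast?_destutter_ne]

theorem card_filter_destutter_ne_mem_smirnovWords [Fintype α] (r s : Multiset α) (a b : α) :
    #{w ∈ wordsOf s | w.destutter (· ≠ ·) ∈ smirnovWords r a b} =
      #(smirnovWords r a b) * ∏ c, compCount (r.count c) (s.count c) := by
  set W := {w ∈ wordsOf s | w.destutter (· ≠ ·) ∈ smirnovWords r a b} with hW
  have hmaps : Set.MapsTo (List.destutter (· ≠ ·)) (W : Set (List α)) (smirnovWords r a b) :=
    fun w hw => (mem_filter.1 hw).2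
  rw [card_eq_sum_card_fiberwise hmaps]
  refine sum_const_nat fun v hv => ?_
  obtain ⟨hr, hchain, -⟩ := mem_filter.1 hv
  have hfiber := card_filter_destutter_ne_eq s hchain
  simp only [← Multiset.coe_count, mem_wordsOf.1 hr] at hfiber
  rw [hW, filter_filter, ← hfiber]
  exact congrArg card (filter_congr fun w _ => and_iff_right_of_imp fun h => h ▸ hv)

theorem two_mul_count_destutter_ne (c : α) {n : ℕ} (f : Fin (n + 1) → α) :
    2 * ((List.ofFn f).destutter (· ≠ ·)).count c =
      #{i : Fin n | ¬(f i.castSucc = c ↔ f i.succ = c)} +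
        (if f 0 = c then 1 else 0) + (if f (Fin.last n) = c then 1 else 0) := by
  induction n with
  | zero => by_cases h : f 0 = c <;> simp [h]
  | succ n ih =>
    have ih := ih fun i => f i.succ
    rw [List.ofFn_succ] at ih
    rw [Fin.card_filter_univ_succ', List.ofFn_succ, List.ofFn_succ]
    simp only [Fin.castSucc_zero, Fin.castSucc_succ, Fin.succ_last] at ih ⊢
    obtain h | h := eq_or_ne (f 0) (f (Fin.succ 0))
    · simp only [h, destutter_ne_cons_cons_self, ih, not_true_eq_false, if_false, zero_add]
    · rw [destutter_ne_cons_cons_of_ne h, List.count_cons, mul_add, ih]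
      grind

end Runs

section ExpansionTerms

open Module

variable {ι K E : Type*} [Ring K] [AddCommGroup E] [Module K E]

theorem injOn_repr_smul (b : Basis ι K E) (x : E) :
    Set.InjOn (fun i => b.repr x i • b i) {i | b.repr x i ≠ 0} := by
  intro i hi k _ h
  by_contra hik
  have hcoord := DFunLike.congr_fun (congrArg b.repr h) i
  simp only [map_smul, Basis.repr_self, Finsupp.smul_single_one, Finsupp.single_eq_same,
    Finsupp.single_eq_of_ne hik] at hcoord
  exact hi hcoord

variable [Fintype ι]

open Classical in
/-- The nonzero terms `x_i • b_i` of the expansion of `x` in the basis `b`. When all coordinates lie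
in `{-1, 0, 1}`, this is the minimal set of vectors `± b_i` with sum `x`. -/
def expansionTerms (b : Basis ι K E) (x : E) : Finset E :=
  ({i | b.repr x i ≠ 0} : Finset ι).image fun i => b.repr x i • b i

open Classical in
theorem card_expansionTerms (b : Basis ι K E) (x : E) :
    #(expansionTerms b x) = #{i | b.repr x i ≠ 0} :=
  card_image_of_injOn (by simpa using injOn_repr_smul b x)

theorem sum_expansionTerms (b : Basis ι K E) (x : E) : ∑ q ∈ expansionTerms b x, q = x := by
  classical
  rw [expansionTerms, sum_image (by simpa using injOn_repr_smul b x), sum_filter_of_ne, b.sum_repr]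
  rintro i - h h'
  simp [h'] at h

theorem expansionTerms_subset [LinearOrder K] [IsStrictOrderedRing K] {b : Basis ι K E} {x : E}
    {Q : Finset E} (hx : ∀ i, b.repr x i ∈ ({-1, 0, 1} : Set K))
    (hQ : ∀ q ∈ Q, ∃ i, q = b i ∨ q = -b i) (hsum : ∑ q ∈ Q, q = x) :
    expansionTerms b x ⊆ Q := by
  classical
  intro y hy
  simp only [expansionTerms, mem_image, mem_filter, mem_univ, true_and] at hy
  obtain ⟨i, hi, rfl⟩ := hy
  by_contra hiQ
  have hopposite : ∀ q ∈ Q, b.repr q i * b.repr x i ≤ 0 := by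
    intro q hq
    have hne : q ≠ b.repr x i • b i := fun h => hiQ (h ▸ hq)
    have hxi : b.repr x i = -1 ∨ b.repr x i = 0 ∨ b.repr x i = 1 := hx i
    obtain ⟨k, hk⟩ := hQ q hq
    obtain rfl | hki := eq_or_ne k i
    · rcases hk with rfl | rfl <;> rcases hxi with h | h | h <;> simp_all
    · rcases hk with rfl | rfl <;> simp [hki.symm]
  refine (mul_self_pos.2 hi).not_ge ?_
  calc b.repr x i * b.repr x i = ∑ q ∈ Q, b.repr q i * b.repr x i := by
        rw [← sum_mul, ← Finsupp.finsetSum_apply, ← map_sum, hsum]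
    _ ≤ 0 := sum_nonpos hopposite

end ExpansionTerms

section Cycle

open Module

theorem isMinDecomp_iff_eq_expansionTerms {ι : Type*} [Fintype ι] {t : ℕ} {D : ℕ → Vec t}
    (b : Basis ι ℝ (Vec t)) (hD : ∀ q, q ∈ VD t D ↔ ∃ i, q = b i ∨ q = -b i) {T : Vec t}
    (hT : ∀ i, b.repr T i ∈ ({-1, 0, 1} : Set ℝ)) {Q : Finset (Vec t)} :
    IsMinDecomp t D T Q ↔ Q = expansionTerms b T := by
  have hsubset : ∀ {Q' : Finset (Vec t)}, Q' ⊆ VD t D → ∑ q ∈ Q', q = T →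
      expansionTerms b T ⊆ Q' := fun hQ' =>
    expansionTerms_subset hT fun q hq => (hD q).1 (hQ' hq)
  have hVD : expansionTerms b T ⊆ VD t D := by
    intro q hq
    simp only [expansionTerms, mem_image, mem_filter, mem_univ, true_and] at hq
    obtain ⟨i, hi, rfl⟩ := hq
    obtain h | h | h := hT i
    · exact (hD _).2 ⟨i, .inr (by simp [h])⟩
    · exact absurd h hi
    · exact (hD _).2 ⟨i, .inl (by simp_all)⟩
  constructor
  · rintro ⟨hQ, hsum, hmin⟩
    by_contra hne
    exact hmin _ hVD (sum_expansionTerms b T)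
      ((hsubset hQ hsum).ssubset_of_ne fun h => hne h.symm)
  · rintro rfl
    exact ⟨hVD, sum_expansionTerms b T, fun Q' hQ' hsum h => h.2 (hsubset hQ' hsum)⟩

/-- The coordinate functionals of the basis `R^0, …, R^n` of `ℝ^(n+1)`. -/
def rvecCoord (n : ℕ) : Fin (n + 1) → Dual ℝ (Vec (n + 1)) :=
  Fin.cons ((1 / 2 : ℝ) • ((LinearMap.proj 0 : Dual ℝ (Vec (n + 1))) + LinearMap.proj (Fin.last n)))
    fun m => (1 / 2 : ℝ) • ((LinearMap.proj m.succ : Dual ℝ (Vec (n + 1))) -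
      LinearMap.proj m.castSucc)

theorem rvecCoord_zero (n : ℕ) (T : Vec (n + 1)) :
    rvecCoord n 0 T = (T 0 + T (Fin.last n)) / 2 := by
  simp [rvecCoord, div_eq_inv_mul, mul_add]

theorem rvecCoord_succ {n : ℕ} (m : Fin n) (T : Vec (n + 1)) :
    rvecCoord n m.succ T = (T m.succ - T m.castSucc) / 2 := by
  simp [rvecCoord, div_eq_inv_mul]

theorem rvecCoord_Rvec {n : ℕ} (i k : Fin (n + 1)) :
    rvecCoord n i (Rvec (n + 1) k) = if i = k then 1 else 0 := by
  induction i using Fin.cases with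
  | zero =>
    rw [rvecCoord_zero]
    simp only [Rvec, Fin.ext_iff, Fin.val_zero, Fin.val_last]
    grind
  | succ m =>
    rw [rvecCoord_succ]
    simp only [Rvec, Fin.ext_iff, Fin.val_succ, Fin.val_castSucc]
    grind

theorem eq_zero_of_rvecCoord_eq_zero {n : ℕ} {T : Vec (n + 1)} (h : ∀ i, rvecCoord n i T = 0) :
    T = 0 := by
  have hconst : ∀ i, T i = T 0 := fun i => by
    induction i using Fin.induction with
    | zero => rfl
    | succ m ih =>
      have hm := h m.succ
      rw [rvecCoord_succ] at hm
      linarith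
  have h0 := h 0
  rw [rvecCoord_zero, hconst (Fin.last n)] at h0
  ext i
  rw [hconst i, Pi.zero_apply]
  linarith

theorem dualBases_Rvec (n : ℕ) :
    DualBases (fun k : Fin (n + 1) => Rvec (n + 1) k) (rvecCoord n) where
  eval_same i := by simp [rvecCoord_Rvec]
  eval_of_ne i k h := by simp [rvecCoord_Rvec, h]
  total h := sub_eq_zero.1 (eq_zero_of_rvecCoord_eq_zero fun i => by simp [h i])

/-- The basis `R^0, …, R^n` of `ℝ^(n+1)`. -/
def rvecBasis (n : ℕ) : Basis (Fin (n + 1)) ℝ (Vec (n + 1)) := (dualBases_Rvec n).basis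

theorem rvecBasis_apply {n : ℕ} (k : Fin (n + 1)) : rvecBasis n k = Rvec (n + 1) k := by
  rw [rvecBasis, DualBases.coe_basis]

theorem rvecBasis_repr_zero {n : ℕ} (T : Vec (n + 1)) :
    (rvecBasis n).repr T 0 = (T 0 + T (Fin.last n)) / 2 := rvecCoord_zero n T

theorem rvecBasis_repr_succ {n : ℕ} (T : Vec (n + 1)) (m : Fin n) :
    (rvecBasis n).repr T m.succ = (T m.succ - T m.castSucc) / 2 := rvecCoord_succ m T

theorem mem_VD_Rcyc_iff {n : ℕ} {q : Vec (n + 1)} :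
    q ∈ VD (n + 1) (Rcyc (n + 1)) ↔
      ∃ k : Fin (n + 1), q = Rvec (n + 1) k ∨ q = -Rvec (n + 1) k := by
  simp only [VD, mem_image, mem_range]
  constructor
  · rintro ⟨k, hk, rfl⟩
    rw [Rcyc, Nat.mod_eq_of_lt hk]
    split_ifs with h
    · exact ⟨⟨k, h⟩, .inl rfl⟩
    · exact ⟨⟨k - (n + 1), by lia⟩, .inr rfl⟩
  · rintro ⟨⟨k, hk⟩, rfl | rfl⟩
    · exact ⟨k, by lia, by rw [Rcyc, Nat.mod_eq_of_lt (by lia), if_pos hk]⟩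
    · refine ⟨k + (n + 1), by lia, ?_⟩
      rw [Rcyc, Nat.mod_eq_of_lt (by lia), if_neg (by lia), Nat.add_sub_cancel]

theorem rvecBasis_repr_topeOf_mem {n : ℕ} (A : Finset (Fin (n + 1))) (i : Fin (n + 1)) :
    (rvecBasis n).repr (topeOf (n + 1) A) i ∈ ({-1, 0, 1} : Set ℝ) := by
  induction i using Fin.cases with
  | zero => rw [rvecBasis_repr_zero]; unfold topeOf; split_ifs <;> norm_num
  | succ m => rw [rvecBasis_repr_succ]; unfold topeOf; split_ifs <;> norm_num

theorem rvecBasis_repr_topeOf_zero_ne_zero {n : ℕ} {A : Finset (Fin (n + 1))} :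
    (rvecBasis n).repr (topeOf (n + 1) A) 0 ≠ 0 ↔ (0 ∈ A ↔ Fin.last n ∈ A) := by
  by_cases h₀ : 0 ∈ A <;> by_cases h₁ : Fin.last n ∈ A <;>
    norm_num [rvecBasis_repr_zero, topeOf, h₀, h₁]

theorem rvecBasis_repr_topeOf_succ_ne_zero {n : ℕ} {A : Finset (Fin (n + 1))} {m : Fin n} :
    (rvecBasis n).repr (topeOf (n + 1) A) m.succ ≠ 0 ↔ ¬(m.castSucc ∈ A ↔ m.succ ∈ A) := by
  by_cases h₀ : m.castSucc ∈ A <;> by_cases h₁ : m.succ ∈ A <;>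
    norm_num [rvecBasis_repr_succ, topeOf, h₀, h₁]

theorem qIs_iff {n : ℕ} {A : Finset (Fin (n + 1))} {ℓ : ℕ} :
    qIs (n + 1) A ℓ ↔ ℓ = (if (0 ∈ A ↔ Fin.last n ∈ A) then 1 else 0) +
      #{m : Fin n | ¬(m.castSucc ∈ A ↔ m.succ ∈ A)} := by
  have hVD : ∀ q, q ∈ VD (n + 1) (Rcyc (n + 1)) ↔ ∃ k, q = rvecBasis n k ∨ q = -rvecBasis n k := by
    simp only [rvecBasis_apply, mem_VD_Rcyc_iff, implies_true]
  simp only [qIs, card_expansionTerms, exists_eq_left,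
    isMinDecomp_iff_eq_expansionTerms (rvecBasis n) hVD (rvecBasis_repr_topeOf_mem A)]
  rw [eq_comm, Fin.card_filter_univ_succ']
  simp only [rvecBasis_repr_topeOf_zero_ne_zero, rvecBasis_repr_topeOf_succ_ne_zero]

theorem qIs_compl {n : ℕ} {A : Finset (Fin (n + 1))} {ℓ : ℕ} :
    qIs (n + 1) Aᶜ ℓ ↔ qIs (n + 1) A ℓ := by
  simp only [qIs_iff, mem_compl, not_iff_not]

end Cycle

section Counting

variable {α : Type*} [DecidableEq α]

/-- The number of maximal runs of `c` in a word with first letter `a` and last letter `b` for which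
the positions of `c` form a set with `q`-value the odd number `ℓ`. -/
def runCount (a b c : α) (ℓ : ℕ) : ℕ := if a = c ∨ b = c then (ℓ + 1) / 2 else (ℓ - 1) / 2

theorem qIs_filter_eq_iff {n ℓ : ℕ} (hℓ : Odd ℓ) (f : Fin (n + 1) → α) (c : α) :
    qIs (n + 1) {i | f i = c} ℓ ↔
      ((List.ofFn f).destutter (· ≠ ·)).count c = runCount (f 0) (f (Fin.last n)) c ℓ := by
  have hruns := two_mul_count_destutter_ne c f
  obtain ⟨k, rfl⟩ := hℓ
  simp only [qIs_iff, mem_filter, mem_univ, true_and, runCount]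
  by_cases h₀ : f 0 = c <;> by_cases h₁ : f (Fin.last n) = c <;>
    simp only [h₀, h₁, if_true, if_false, true_or, or_true, or_self, iff_self, iff_false,
      false_iff, not_true_eq_false] at hruns ⊢ <;> lia

variable [Fintype α]

/-- The multiset that contains each letter `c` exactly `m c` times. -/
def ofCounts (m : α → ℕ) : Multiset α := ∑ c, Multiset.replicate (m c) c

theorem count_ofCounts (m : α → ℕ) (c : α) : (ofCounts m).count c = m c := by
  simp [ofCounts, Multiset.count_sum', Multiset.count_replicate]

omit [DecidableEq α] in
theorem card_ofCounts (m : α → ℕ) : (ofCounts m).card = ∑ c, m c := by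
  simp [ofCounts]

theorem ofFn_mem_wordsOf_ofCounts {n : ℕ} {f : Fin n → α} {m : α → ℕ} :
    List.ofFn f ∈ wordsOf (ofCounts m) ↔ ∀ c, #{i | f i = c} = m c := by
  rw [mem_wordsOf, Multiset.ext, ← Fin.univ_val_map]
  simp only [count_ofCounts, Multiset.count_map, eq_comm]
  rfl

theorem destutter_ne_ofFn_mem_smirnovWords {n : ℕ} {f : Fin (n + 1) → α} {r : α → ℕ} {a b : α} :
    (List.ofFn f).destutter (· ≠ ·) ∈ smirnovWords (ofCounts r) a b ↔
      (∀ c, ((List.ofFn f).destutter (· ≠ ·)).count c = r c) ∧ f 0 = a ∧ f (Fin.last n) = b := by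
  have hhead : (List.ofFn f).head? = some (f 0) := by rw [List.ofFn_succ, List.head?_cons]
  have hlast : (List.ofFn f).getLast? = some (f (Fin.last n)) := by
    rw [List.getLast?_eq_getLast_of_ne_nil (by simp), List.getLast_ofFn]
    rfl
  simp only [destutter_ne_mem_smirnovWords, Multiset.ext, Multiset.coe_count, count_ofCounts,
    hhead, hlast, Option.some.injEq]

theorem ncard_setOf_card_fiber_eq_and_qIs {n : ℕ} {a b : α} {m ℓ : α → ℕ} (hℓ : ∀ c, Odd (ℓ c))
    (hm : ∑ c, m c = n + 1) :
    {f : Fin (n + 1) → α | (∀ c, #{i | f i = c} = m c ∧ qIs (n + 1) {i | f i = c} (ℓ c)) ∧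
        f 0 = a ∧ f (Fin.last n) = b}.ncard =
      #(smirnovWords (ofCounts fun c => runCount a b c (ℓ c)) a b) *
        ∏ c, compCount (runCount a b c (ℓ c)) (m c) := by
  have hcount := card_filter_destutter_ne_mem_smirnovWords
    (ofCounts fun c => runCount a b c (ℓ c)) (ofCounts m) a b
  simp only [count_ofCounts] at hcount
  rw [← hcount, ← Set.ncard_coe_finset,
    ← Set.ncard_preimage_of_injective_subset_range (List.ofFn_injective (n := n + 1))]
  · congr 1
    ext f
    simp only [Set.mem_preimage, coe_filter, Set.mem_ofPred_eq, ofFn_mem_wordsOf_ofCounts,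
      destutter_ne_ofFn_mem_smirnovWords, qIs_filter_eq_iff (hℓ _), forall_and, and_assoc]
    refine and_congr_right fun _ => and_congr_left ?_
    rintro ⟨rfl, rfl⟩
    rfl
  · intro w hw
    have hlen : w.length = n + 1 := by
      rw [← hm, ← card_ofCounts, ← mem_wordsOf.1 (mem_filter.1 hw).1, Multiset.coe_card]
    exact ⟨fun i => w.get (i.cast hlen.symm), by rw [← List.ofFn_congr hlen, List.ofFn_get]⟩

theorem ncard_setOf_card_fiber_eq_and_qIs_of_int {n : ℕ} {a b : α} {m : α → ℤ} {ℓ : α → ℕ}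
    (hℓ : ∀ c, Odd (ℓ c)) (hm : ∑ c, m c = n + 1) :
    {f : Fin (n + 1) → α | (∀ c, 0 < m c ∧ #{i | f i = c} = m c ∧
        qIs (n + 1) {i | f i = c} (ℓ c)) ∧ f 0 = a ∧ f (Fin.last n) = b}.ncard =
      #(smirnovWords (ofCounts fun c => runCount a b c (ℓ c)) a b) *
        ∏ c, comp (runCount a b c (ℓ c)) (m c) := by
  by_cases hpos : ∀ c, 0 < m c
  · lift m to α → ℕ using fun c => (hpos c).le
    simp only [Nat.cast_pos, Nat.cast_inj] at hpos ⊢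
    simp only [hpos, true_and, comp_natCast_of_pos _ (hpos _)]
    exact ncard_setOf_card_fiber_eq_and_qIs hℓ (Nat.cast_injective (R := ℤ) (by simpa using hm))
  · obtain ⟨c, hc⟩ := not_forall.1 hpos
    rw [prod_eq_zero (mem_univ c) (comp_of_nonpos _ (not_lt.1 hc)), mul_zero, Set.ncard_eq_zero]
    exact Set.eq_empty_of_forall_notMem fun f hf => hc (hf.1 c).1

end Counting

section Pairs

variable {ι : Type*} [DecidableEq ι]

/-- The letter of `i` in the word of a pair `(A, B)`: the letters `θ, α, β, γ = 0, 1, 2, 3` mark the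
elements outside of `A ∪ B`, of `A \ B`, of `B \ A` and of `A ∩ B`. -/
def pairLetter (p : Finset ι × Finset ι) (i : ι) : Fin 4 :=
  if i ∈ p.1 then (if i ∈ p.2 then 3 else 1) else (if i ∈ p.2 then 2 else 0)

theorem pairLetter_eq_pairLetter_iff {p q : Finset ι × Finset ι} {i : ι} :
    pairLetter p i = pairLetter q i ↔ (i ∈ p.1 ↔ i ∈ q.1) ∧ (i ∈ p.2 ↔ i ∈ q.2) := by
  grind [pairLetter]

theorem pairLetter_bijective [Finite ι] :
    Function.Bijective (pairLetter : Finset ι × Finset ι → ι → Fin 4) := by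
  constructor
  · intro p q h
    have hmem i := pairLetter_eq_pairLetter_iff.1 (congrFun h i)
    exact Prod.ext (Finset.ext fun i => (hmem i).1) (Finset.ext fun i => (hmem i).2)
  · intro f
    have := Fintype.ofFinite ι
    refine ⟨(({i | f i = 1 ∨ f i = 3} : Finset ι), ({i | f i = 2 ∨ f i = 3} : Finset ι)),
      funext fun i => ?_⟩
    simp only [pairLetter, mem_filter, mem_univ, true_and]
    generalize f i = c
    fin_cases c <;> rfl

theorem pair_inter_eq_iff {a b : ι} {A X : Finset ι} (hX : X ⊆ {a, b}) :
    {a, b} ∩ A = X ↔ (a ∈ A ↔ a ∈ X) ∧ (b ∈ A ↔ b ∈ X) := by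
  grind

theorem pair_inter_eq_and_iff {a b : ι} {p q : Finset ι × Finset ι} (h₁ : q.1 ⊆ {a, b})
    (h₂ : q.2 ⊆ {a, b}) :
    {a, b} ∩ p.1 = q.1 ∧ {a, b} ∩ p.2 = q.2 ↔
      pairLetter p a = pairLetter q a ∧ pairLetter p b = pairLetter q b := by
  rw [pair_inter_eq_iff h₁, pair_inter_eq_iff h₂, pairLetter_eq_pairLetter_iff,
    pairLetter_eq_pairLetter_iff]
  tauto

section Fibers

variable [Fintype ι] (p : Finset ι × Finset ι)

theorem filter_pairLetter_eq_zero : ({i | pairLetter p i = 0} : Finset ι) = (p.1 ∪ p.2)ᶜ := by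
  ext; grind [pairLetter, mem_compl]

theorem filter_pairLetter_eq_one : ({i | pairLetter p i = 1} : Finset ι) = p.1 \ p.2 := by
  ext; grind [pairLetter]

theorem filter_pairLetter_eq_two : ({i | pairLetter p i = 2} : Finset ι) = p.2 \ p.1 := by
  ext; grind [pairLetter]

theorem filter_pairLetter_eq_three : ({i | pairLetter p i = 3} : Finset ι) = p.1 ∩ p.2 := by
  ext; grind [pairLetter]

end Fibers

theorem forall_fin_four {P : Fin 4 → Prop} : (∀ c, P c) ↔ P 0 ∧ P 1 ∧ P 2 ∧ P 3 := by
  simp [Fin.forall_fin_succ]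

theorem Fr_eq_card_smirnovWords (a b : Fin 4) (r : Fin 4 → ℕ) :
    Fr a b (r 0) (r 1) (r 2) (r 3) = #(smirnovWords (ofCounts r) a b) := by
  rw [← Set.ncard_coe_finset, Fr]
  congr 1
  ext w
  simp only [Set.mem_ofPred_eq, smirnovWords, coe_filter, mem_wordsOf, Multiset.ext,
    Multiset.coe_count, count_ofCounts, forall_fin_four]
  tauto

theorem ncard_setOf_card_fiber_pairLetter_and_qIs {n : ℕ} {a b : Fin 4} {m : Fin 4 → ℤ}
    {ℓ : Fin 4 → ℕ} (hℓ : ∀ c, Odd (ℓ c)) (hm : ∑ c, m c = n + 1) :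
    {p : Finset (Fin (n + 1)) × Finset (Fin (n + 1)) |
      (∀ c, 0 < m c ∧ #{i | pairLetter p i = c} = m c ∧
        qIs (n + 1) {i | pairLetter p i = c} (ℓ c)) ∧
      pairLetter p 0 = a ∧ pairLetter p (Fin.last n) = b}.ncard =
    Fr a b (runCount a b 0 (ℓ 0)) (runCount a b 1 (ℓ 1)) (runCount a b 2 (ℓ 2))
      (runCount a b 3 (ℓ 3)) * ∏ c, comp (runCount a b c (ℓ c)) (m c) := by
  rw [Fr_eq_card_smirnovWords a b fun c => runCount a b c (ℓ c),
    ← ncard_setOf_card_fiber_eq_and_qIs_of_int hℓ hm,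
    ← Set.ncard_preimage_of_injective_subset_range pairLetter_bijective.injective
      (by simp only [pairLetter_bijective.surjective.range_eq, Set.subset_univ])]
  rfl

theorem forall_card_fiber_and_qIs_iff {n j' j'' j ℓ' ℓ'' ℓcap ℓ : ℕ}
    {p : Finset (Fin (n + 1)) × Finset (Fin (n + 1))} :
    (∀ c, 0 < (![(n + 1 : ℕ) - (j' + j'' - j), j' - j, j'' - j, j] : Fin 4 → ℤ) c ∧
      #{i | pairLetter p i = c} =
        (![(n + 1 : ℕ) - (j' + j'' - j), j' - j, j'' - j, j] : Fin 4 → ℤ) c ∧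
      qIs (n + 1) {i | pairLetter p i = c} ((![ℓ, ℓ', ℓ'', ℓcap] : Fin 4 → ℕ) c)) ↔
    p.1.card = j' ∧ j' < n + 1 ∧ p.2.card = j'' ∧ j'' < n + 1 ∧ (p.1 ∩ p.2).card = j ∧ 0 < j ∧
      j' < (p.1 ∪ p.2).card ∧ j'' < (p.1 ∪ p.2).card ∧ (p.1 ∪ p.2).card < n + 1 ∧
      qIs (n + 1) (p.1 \ p.2) ℓ' ∧ qIs (n + 1) (p.2 \ p.1) ℓ'' ∧ qIs (n + 1) (p.1 ∩ p.2) ℓcap ∧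
      qIs (n + 1) (p.1 ∪ p.2) ℓ := by
  have hA := card_sdiff_add_card_inter p.1 p.2
  have hB := card_sdiff_add_card_inter p.2 p.1
  have hAB := card_union_add_card_inter p.1 p.2
  have hcompl := card_compl_add_card (p.1 ∪ p.2)
  rw [inter_comm p.2] at hB
  rw [Fintype.card_fin] at hcompl
  simp only [forall_fin_four, Matrix.cons_val, filter_pairLetter_eq_zero,
    filter_pairLetter_eq_one, filter_pairLetter_eq_two, filter_pairLetter_eq_three, qIs_compl]
  grind

theorem ncard_setOf_qIs_and_pair_inter_eq {n j' j'' j ℓ' ℓ'' ℓcap ℓ : ℕ} (hℓ' : Odd ℓ')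
    (hℓ'' : Odd ℓ'') (hℓcap : Odd ℓcap) (hℓ : Odd ℓ) (X Y : Finset (Fin (n + 1))) {a b : Fin 4}
    (hX : X ⊆ {0, Fin.last n}) (hY : Y ⊆ {0, Fin.last n}) (ha : pairLetter (X, Y) 0 = a)
    (hb : pairLetter (X, Y) (Fin.last n) = b) :
    {p : Finset (Fin (n + 1)) × Finset (Fin (n + 1)) |
      p.1.card = j' ∧ j' < n + 1 ∧ p.2.card = j'' ∧ j'' < n + 1 ∧ (p.1 ∩ p.2).card = j ∧ 0 < j ∧
      j' < (p.1 ∪ p.2).card ∧ j'' < (p.1 ∪ p.2).card ∧ (p.1 ∪ p.2).card < n + 1 ∧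
      qIs (n + 1) (p.1 \ p.2) ℓ' ∧ qIs (n + 1) (p.2 \ p.1) ℓ'' ∧ qIs (n + 1) (p.1 ∩ p.2) ℓcap ∧
      qIs (n + 1) (p.1 ∪ p.2) ℓ ∧
      {0, Fin.last n} ∩ p.1 = X ∧ {0, Fin.last n} ∩ p.2 = Y}.ncard =
    Fr a b (runCount a b 0 ℓ) (runCount a b 1 ℓ') (runCount a b 2 ℓ'') (runCount a b 3 ℓcap) *
      comp (runCount a b 0 ℓ) ((n + 1 : ℕ) - (j' + j'' - j)) * comp (runCount a b 1 ℓ') (j' - j) *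
      comp (runCount a b 2 ℓ'') (j'' - j) * comp (runCount a b 3 ℓcap) j := by
  have hsum : ∑ c, (![(n + 1 : ℕ) - (j' + j'' - j), j' - j, j'' - j, j] : Fin 4 → ℤ) c = n + 1 := by
    simp only [Fin.sum_univ_four, Matrix.cons_val]
    lia
  have hodd : ∀ c, Odd ((![ℓ, ℓ', ℓ'', ℓcap] : Fin 4 → ℕ) c) :=
    forall_fin_four.2 ⟨hℓ, hℓ', hℓ'', hℓcap⟩
  have hcount := ncard_setOf_card_fiber_pairLetter_and_qIs (a := a) (b := b) hodd hsum
  have htrace p := pair_inter_eq_and_iff (p := p) (q := (X, Y)) hX hY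
  simp only [forall_card_fiber_and_qIs_iff, Fin.prod_univ_four, Matrix.cons_val, and_assoc,
    ← mul_assoc] at hcount
  simpa only [htrace, ha, hb] using hcount

end Pairs

/-- cases (i)–(v): counts of ordered two-member intersecting Sperner families
not covering `[t]`, refined by `q(A-B)`, `q(B-A)`, `q(A∩B)`, `q(A∪B)` and traces on `{1,t}`. -/
theorem stmt16 (t j' j'' j ℓ' ℓ'' ℓcap ℓ : ℕ) (ht : 3 ≤ t)
    (hodd' : Odd ℓ') (hle' : ℓ' ≤ t) (hodd'' : Odd ℓ'') (hle'' : ℓ'' ≤ t)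
    (hoddc : Odd ℓcap) (hlec : ℓcap ≤ t) (hoddl : Odd ℓ) (hlel : ℓ ≤ t)
    (S1 S2 S3 S4 S5 : Set (Finset (Fin t) × Finset (Fin t)))
    (hS1 : S1 = { p : Finset (Fin t) × Finset (Fin t) | p.1.card = j' ∧ j' < t ∧ p.2.card = j'' ∧ j'' < t ∧ (p.1 ∩ p.2).card = j ∧ 0 < j ∧ j' < (p.1 ∪ p.2).card ∧ j'' < (p.1 ∪ p.2).card ∧ (p.1 ∪ p.2).card < t ∧ qIs t (p.1 \ p.2) ℓ' ∧ qIs t (p.2 \ p.1) ℓ'' ∧ qIs t (p.1 ∩ p.2) ℓcap ∧ qIs t (p.1 ∪ p.2) ℓ ∧ ({⟨0, by omega⟩, ⟨t - 1, by omega⟩} : Finset (Fin t)) ∩ p.1 = ({⟨0, by omega⟩} : Finset (Fin t)) ∧ ({⟨0, by omega⟩, ⟨t - 1, by omega⟩} : Finset (Fin t)) ∩ p.2 = ({⟨0, by omega⟩} : Finset (Fin t)) })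
    (hS2 : S2 = { p : Finset (Fin t) × Finset (Fin t) | p.1.card = j' ∧ j' < t ∧ p.2.card = j'' ∧ j'' < t ∧ (p.1 ∩ p.2).card = j ∧ 0 < j ∧ j' < (p.1 ∪ p.2).card ∧ j'' < (p.1 ∪ p.2).card ∧ (p.1 ∪ p.2).card < t ∧ qIs t (p.1 \ p.2) ℓ' ∧ qIs t (p.2 \ p.1) ℓ'' ∧ qIs t (p.1 ∩ p.2) ℓcap ∧ qIs t (p.1 ∪ p.2) ℓ ∧ ({⟨0, by omega⟩, ⟨t - 1, by omega⟩} : Finset (Fin t)) ∩ p.1 = ({⟨0, by omega⟩} : Finset (Fin t)) ∧ ({⟨0, by omega⟩, ⟨t - 1, by omega⟩} : Finset (Fin t)) ∩ p.2 = ({⟨0, by omega⟩, ⟨t - 1, by omega⟩} : Finset (Fin t)) })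
    (hS3 : S3 = { p : Finset (Fin t) × Finset (Fin t) | p.1.card = j' ∧ j' < t ∧ p.2.card = j'' ∧ j'' < t ∧ (p.1 ∩ p.2).card = j ∧ 0 < j ∧ j' < (p.1 ∪ p.2).card ∧ j'' < (p.1 ∪ p.2).card ∧ (p.1 ∪ p.2).card < t ∧ qIs t (p.1 \ p.2) ℓ' ∧ qIs t (p.2 \ p.1) ℓ'' ∧ qIs t (p.1 ∩ p.2) ℓcap ∧ qIs t (p.1 ∪ p.2) ℓ ∧ ({⟨0, by omega⟩, ⟨t - 1, by omega⟩} : Finset (Fin t)) ∩ p.1 = ({⟨0, by omega⟩} : Finset (Fin t)) ∧ ({⟨0, by omega⟩, ⟨t - 1, by omega⟩} : Finset (Fin t)) ∩ p.2 = ∅ })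
    (hS4 : S4 = { p : Finset (Fin t) × Finset (Fin t) | p.1.card = j' ∧ j' < t ∧ p.2.card = j'' ∧ j'' < t ∧ (p.1 ∩ p.2).card = j ∧ 0 < j ∧ j' < (p.1 ∪ p.2).card ∧ j'' < (p.1 ∪ p.2).card ∧ (p.1 ∪ p.2).card < t ∧ qIs t (p.1 \ p.2) ℓ' ∧ qIs t (p.2 \ p.1) ℓ'' ∧ qIs t (p.1 ∩ p.2) ℓcap ∧ qIs t (p.1 ∪ p.2) ℓ ∧ ({⟨0, by omega⟩, ⟨t - 1, by omega⟩} : Finset (Fin t)) ∩ p.1 = ({⟨0, by omega⟩} : Finset (Fin t)) ∧ ({⟨0, by omega⟩, ⟨t - 1, by omega⟩} : Finset (Fin t)) ∩ p.2 = ({⟨t - 1, by omega⟩} : Finset (Fin t)) })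
    (hS5 : S5 = { p : Finset (Fin t) × Finset (Fin t) | p.1.card = j' ∧ j' < t ∧ p.2.card = j'' ∧ j'' < t ∧ (p.1 ∩ p.2).card = j ∧ 0 < j ∧ j' < (p.1 ∪ p.2).card ∧ j'' < (p.1 ∪ p.2).card ∧ (p.1 ∪ p.2).card < t ∧ qIs t (p.1 \ p.2) ℓ' ∧ qIs t (p.2 \ p.1) ℓ'' ∧ qIs t (p.1 ∩ p.2) ℓcap ∧ qIs t (p.1 ∪ p.2) ℓ ∧ ({⟨0, by omega⟩, ⟨t - 1, by omega⟩} : Finset (Fin t)) ∩ p.1 = ({⟨0, by omega⟩, ⟨t - 1, by omega⟩} : Finset (Fin t)) ∧ ({⟨0, by omega⟩, ⟨t - 1, by omega⟩} : Finset (Fin t)) ∩ p.2 = ({⟨0, by omega⟩, ⟨t - 1, by omega⟩} : Finset (Fin t)) })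
    : S1.ncard = Fr 3 0 ((ℓ + 1) / 2) ((ℓ' - 1) / 2) ((ℓ'' - 1) / 2) ((ℓcap + 1) / 2) * comp ((ℓ + 1) / 2) ((t : ℤ) - ((j' : ℤ) + (j'' : ℤ) - (j : ℤ))) * comp ((ℓ' - 1) / 2) ((j' : ℤ) - (j : ℤ)) * comp ((ℓ'' - 1) / 2) ((j'' : ℤ) - (j : ℤ)) * comp ((ℓcap + 1) / 2) ((j : ℤ)) ∧
      S2.ncard = Fr 3 2 ((ℓ - 1) / 2) ((ℓ' - 1) / 2) ((ℓ'' + 1) / 2) ((ℓcap + 1) / 2) * comp ((ℓ - 1) / 2) ((t : ℤ) - ((j' : ℤ) + (j'' : ℤ) - (j : ℤ))) * comp ((ℓ' - 1) / 2) ((j' : ℤ) - (j : ℤ)) * comp ((ℓ'' + 1) / 2) ((j'' : ℤ) - (j : ℤ)) * comp ((ℓcap + 1) / 2) ((j : ℤ)) ∧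
      S3.ncard = Fr 1 0 ((ℓ + 1) / 2) ((ℓ' + 1) / 2) ((ℓ'' - 1) / 2) ((ℓcap - 1) / 2) * comp ((ℓ + 1) / 2) ((t : ℤ) - ((j' : ℤ) + (j'' : ℤ) - (j : ℤ))) * comp ((ℓ' + 1) / 2) ((j' : ℤ) - (j : ℤ)) * comp ((ℓ'' - 1) / 2) ((j'' : ℤ) - (j : ℤ)) * comp ((ℓcap - 1) / 2) ((j : ℤ)) ∧
      S4.ncard = Fr 1 2 ((ℓ - 1) / 2) ((ℓ' + 1) / 2) ((ℓ'' + 1) / 2) ((ℓcap - 1) / 2) * comp ((ℓ - 1) / 2) ((t : ℤ) - ((j' : ℤ) + (j'' : ℤ) - (j : ℤ))) * comp ((ℓ' + 1) / 2) ((j' : ℤ) - (j : ℤ)) * comp ((ℓ'' + 1) / 2) ((j'' : ℤ) - (j : ℤ)) * comp ((ℓcap - 1) / 2) ((j : ℤ)) ∧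
      S5.ncard = Fr 3 3 ((ℓ - 1) / 2) ((ℓ' - 1) / 2) ((ℓ'' - 1) / 2) ((ℓcap + 1) / 2) * comp ((ℓ - 1) / 2) ((t : ℤ) - ((j' : ℤ) + (j'' : ℤ) - (j : ℤ))) * comp ((ℓ' - 1) / 2) ((j' : ℤ) - (j : ℤ)) * comp ((ℓ'' - 1) / 2) ((j'' : ℤ) - (j : ℤ)) * comp ((ℓcap + 1) / 2) ((j : ℤ)) := by
  obtain ⟨n, rfl⟩ := Nat.exists_eq_add_one.2 (show 0 < t by lia)
  have hne : Fin.last n ≠ 0 := by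
    rw [Ne, Fin.last_eq_zero_iff]
    lia
  subst hS1 hS2 hS3 hS4 hS5
  have hcount := ncard_setOf_qIs_and_pair_inter_eq (n := n) (j' := j') (j'' := j'') (j := j)
    hodd' hodd'' hoddc hoddl
  refine ⟨?_, ?_, ?_, ?_, ?_⟩
  · exact hcount {0} {0} (a := 3) (b := 0) (by simp) (by simp)
      (by simp [pairLetter]) (by simp [pairLetter, hne])
  · exact hcount {0} {0, Fin.last n} (a := 3) (b := 2) (by simp) (by simp)
      (by simp [pairLetter]) (by simp [pairLetter, hne])
  · exact hcount {0} ∅ (a := 1) (b := 0) (by simp) (by simp)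
      (by simp [pairLetter]) (by simp [pairLetter, hne])
  · exact hcount {0} {Fin.last n} (a := 1) (b := 2) (by simp) (by simp)
      (by simp [pairLetter, hne.symm]) (by simp [pairLetter, hne])
  · exact hcount {0, Fin.last n} {0, Fin.last n} (a := 3) (b := 3) (by simp) (by simp)
      (by simp [pairLetter]) (by simp [pairLetter])
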